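/- arXiv:2504.14352 — 2 statements merged into one kernel-verified Lean document; each statement's English description precedes it below -/
import Mathlib

section
/- Let G be a finite non-complete connected simple graph with minimum degree δ(G) and connectivity k(G). Suppose that any two adjacent vertices have at most α common neighbors, and any two vertices at distance 2 have at most β common neighbors. Then k(G) ≥ (2·κ_LLY(G) + 1)·δ(G) − 2α − β − 2. -/
/-!
Let `S` be a minimum vertex cut, so that `V = A ∪ S ∪ B` with `A`, `B` nonempty and no edge between
them. By minimality some `s ∈ S` has neighbors `x ∈ A` and `y ∈ B` (`exists_cut`), and then
`d(x, y) = 2`.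

By Kantorovich duality any function `f` that is `1`-Lipschitz with `f s - f x = 1` bounds
`κ_LLY(x, s)` by `Δf(x) - Δf(s)`, where `Δ` is the normalized Laplacian (`kappaLLY_le`).
Taking `f = 2` on `B`, `f = 1` on `S` and on the neighbors of `s` other than `x`, and `f = 0`
elsewhere gives, with `R = S \ ({s} ∪ N(s))`,
`κ δ ≤ 1 + α + |N(x) ∩ R| + δ (1 - |N(s) ∩ B|) / d_s` (`kappa_mul_minDegree_le`).

Add to this the same bound for the edge `y s`, with `A` and `B` exchanged. Inclusion–exclusion gives
`|N(x) ∩ R| + |N(y) ∩ R| ≤ |R| + β - 1`, since the common neighbor `s` of `x` and `y` is not in `R`.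
Together with `|R| = |S| - 1 - |N(s) ∩ S|`, `|N(s) ∩ A| + |N(s) ∩ B| + |N(s) ∩ S| = d_s` and
`δ ≤ d_s`, this is the claim.
-/

open Filter Finset

attribute [local instance] Classical.propDecidable

variable {V : Type*}

/-- The measure `μ_x^p`. -/
noncomputable def muP [Fintype V] (G : SimpleGraph V) (p : ℝ) (x : V) : V → ℝ :=
  fun z => if z = x then p else if G.Adj x z then (1 - p) / (G.degree x) else 0

/-- A transport plan between two measures. -/
def IsTransportPlan [Fintype V] (μ₁ μ₂ : V → ℝ) (π : V → V → ℝ) : Prop :=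
  (∀ u v, 0 ≤ π u v ∧ π u v ≤ 1) ∧
  (∀ u, ∑ v, π u v = μ₁ u) ∧ (∀ v, ∑ u, π u v = μ₂ v)

/-- The cost of a transport plan. -/
noncomputable def planCost [Fintype V] (G : SimpleGraph V) (π : V → V → ℝ) : ℝ :=
  ∑ u, ∑ v, (G.dist u v : ℝ) * π u v

/-- The Wasserstein distance between two measures on a graph. -/
noncomputable def Wdist [Fintype V] (G : SimpleGraph V) (μ₁ μ₂ : V → ℝ) : ℝ :=
  sInf {c : ℝ | ∃ π, IsTransportPlan μ₁ μ₂ π ∧ c = planCost G π}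

/-- The Lin-Lu-Yau curvature of a pair of vertices. -/
noncomputable def kappaLLY [Fintype V] (G : SimpleGraph V) (x y : V) : ℝ :=
  limUnder (nhdsWithin 1 (Set.Iio (1 : ℝ)))
    (fun p => (1 - Wdist G (muP G p x) (muP G p y) / (G.dist x y)) / (1 - p))

/-- `κ_LLY^{(i)}(G)`: infimum of the curvature over pairs at distance `i`. -/
noncomputable def kappaLLYscale [Fintype V] (G : SimpleGraph V) (i : ℕ) : ℝ :=
  sInf {k : ℝ | ∃ x y : V, G.dist x y = i ∧ k = kappaLLY G x y}

/-- `κ_LLY(G)`: infimum of the curvature over adjacent pairs. -/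
noncomputable def kappaLLYedge [Fintype V] (G : SimpleGraph V) : ℝ :=
  sInf {k : ℝ | ∃ x y : V, G.Adj x y ∧ k = kappaLLY G x y}

/-- The vertex connectivity `k(G)`. -/
noncomputable def vertexConnectivity [Fintype V] (G : SimpleGraph V) : ℕ :=
  sInf {n : ℕ | ∃ S : Finset V, S.card = n ∧
    (¬ (G.induce ((S : Set V)ᶜ)).Connected ∨ ((S : Set V)ᶜ).Subsingleton)}

/-- The edge connectivity `k'(G)`. -/
noncomputable def edgeConnectivity [Fintype V] (G : SimpleGraph V) : ℕ :=
  sInf {n : ℕ | ∃ F : Finset (Sym2 V), F.card = n ∧ (F : Set (Sym2 V)) ⊆ G.edgeSet ∧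
    ¬ (G.deleteEdges (F : Set (Sym2 V))).Connected}

/-- Amply regular graph with parameters `(d, α, β)`. -/
def IsAmplyRegular [Fintype V] (G : SimpleGraph V) (d α β : ℕ) : Prop :=
  G.IsRegularOfDegree d ∧
  (∀ u v, G.Adj u v → (G.neighborFinset u ∩ G.neighborFinset v).card = α) ∧
  (∀ u v : V, G.dist u v = 2 → (G.neighborFinset u ∩ G.neighborFinset v).card = β)

/-- A matching given as a finite set of ordered pairs satisfying a constraint `P`. -/
def IsPairMatching (P : V → V → Prop) (M : Finset (V × V)) : Prop :=
  (∀ e ∈ M, P e.1 e.2) ∧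
  ∀ e ∈ M, ∀ f ∈ M, e ≠ f → e.1 ≠ f.1 ∧ e.1 ≠ f.2 ∧ e.2 ≠ f.1 ∧ e.2 ≠ f.2

/-! ### Kantorovich duality and the curvature of an edge -/

/-- On a connected graph a function that grows by at most `1` along edges is `1`-Lipschitz. -/
lemma sub_le_dist_of_adj {V : Type*} {G : SimpleGraph V} (hconn : G.Connected)
    {f : V → ℝ} (hf : ∀ u v, G.Adj u v → f v - f u ≤ 1) (u v : V) :
    f v - f u ≤ (G.dist u v : ℝ) := by
  obtain ⟨w, hw⟩ := hconn.exists_walk_length_eq_dist u v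
  rw [← hw]
  clear hw
  induction w with
  | nil => simp
  | cons h p ih =>
    have := hf _ _ h
    rw [SimpleGraph.Walk.length_cons]
    push_cast
    linarith

/-- The mean of `f` under `μ_x^p` is `f x + (1 - p) Δf(x)`, with `Δ` the normalized Laplacian. -/
lemma sum_mul_muP {V : Type*} [Fintype V] (G : SimpleGraph V) (f : V → ℝ) (p : ℝ) (x : V)
    (hx : (G.degree x : ℝ) ≠ 0) :
    ∑ z, f z * muP G p x z =
      f x + (1 - p) * ((∑ z ∈ G.neighborFinset x, (f z - f x)) / G.degree x) := by
  have h : ∀ z, f z * muP G p x z = (if z = x then p * f x else 0) +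
      (if z ∈ G.neighborFinset x then (1 - p) / G.degree x * f z else 0) := by
    intro z
    unfold muP
    by_cases hz : z = x
    · subst hz; simp [mul_comm]
    · simp [hz, mul_comm]
  rw [Finset.sum_congr rfl fun z _ => h z, Finset.sum_add_distrib, Finset.sum_ite_eq',
    Finset.sum_ite_mem, Finset.univ_inter, ← Finset.mul_sum, Finset.sum_sub_distrib]
  simp only [Finset.mem_univ, if_true, Finset.sum_const, SimpleGraph.card_neighborFinset_eq_degree,
    nsmul_eq_mul]
  field_simp
  ring

lemma sum_muP {V : Type*} [Fintype V] (G : SimpleGraph V) (p : ℝ) (x : V)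
    (hx : (G.degree x : ℝ) ≠ 0) : ∑ z, muP G p x z = 1 := by
  simpa using sum_mul_muP G (fun _ => 1) p x hx

lemma muP_nonneg {V : Type*} [Fintype V] (G : SimpleGraph V) {p : ℝ} (h0 : 0 ≤ p) (h1 : p ≤ 1)
    (x z : V) : 0 ≤ muP G p x z := by
  unfold muP
  split_ifs
  · exact h0
  · exact div_nonneg (by linarith) (by positivity)
  · exact le_rfl

/-- The product measure is a transport plan, so the set of costs defining `Wdist` is nonempty. -/
lemma exists_plan {V : Type*} [Fintype V] (G : SimpleGraph V) {p : ℝ} (h0 : 0 ≤ p) (h1 : p ≤ 1)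
    (x y : V) (hx : (G.degree x : ℝ) ≠ 0) (hy : (G.degree y : ℝ) ≠ 0) :
    ∃ π, IsTransportPlan (muP G p x) (muP G p y) π := by
  have hle : ∀ x : V, (G.degree x : ℝ) ≠ 0 → ∀ z, muP G p x z ≤ 1 := fun x hx z => by
    rw [← sum_muP G p x hx]
    exact Finset.single_le_sum (fun i _ => muP_nonneg G h0 h1 x i) (Finset.mem_univ z)
  refine ⟨fun u v => muP G p x u * muP G p y v, fun u v => ⟨?_, ?_⟩, fun u => ?_, fun v => ?_⟩
  · exact mul_nonneg (muP_nonneg G h0 h1 _ _) (muP_nonneg G h0 h1 _ _)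
  · exact mul_le_one₀ (hle x hx u) (muP_nonneg G h0 h1 _ _) (hle y hy v)
  · rw [← Finset.mul_sum, sum_muP G p y hy, mul_one]
  · rw [← Finset.sum_mul, sum_muP G p x hx, one_mul]

/-- Weak Kantorovich duality. -/
lemma sum_sub_sum_le_planCost {V : Type*} [Fintype V] {G : SimpleGraph V} (hconn : G.Connected)
    {f : V → ℝ} (hf : ∀ u v, G.Adj u v → f v - f u ≤ 1) {μ ν : V → ℝ} {π : V → V → ℝ}
    (hπ : IsTransportPlan μ ν π) :
    ∑ z, f z * ν z - ∑ z, f z * μ z ≤ planCost G π := by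
  obtain ⟨h0, h1, h2⟩ := hπ
  have e1 : ∑ z, f z * ν z = ∑ u, ∑ v, f v * π u v := by
    rw [Finset.sum_comm]
    exact Finset.sum_congr rfl fun v _ => by rw [← Finset.mul_sum, h2]
  have e2 : ∑ z, f z * μ z = ∑ u, ∑ v, f u * π u v :=
    Finset.sum_congr rfl fun v _ => by rw [← Finset.mul_sum, h1]
  rw [e1, e2, ← Finset.sum_sub_distrib]
  refine Finset.sum_le_sum fun u _ => ?_
  rw [← Finset.sum_sub_distrib]
  refine Finset.sum_le_sum fun v _ => ?_
  rw [← sub_mul]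
  exact mul_le_mul_of_nonneg_right (sub_le_dist_of_adj hconn hf u v) (h0 u v).1

lemma bddBelow_costs {V : Type*} [Fintype V] (G : SimpleGraph V) (μ ν : V → ℝ) :
    BddBelow {c : ℝ | ∃ π, IsTransportPlan μ ν π ∧ c = planCost G π} := by
  refine ⟨0, ?_⟩
  rintro c ⟨π, hπ, rfl⟩
  exact Finset.sum_nonneg fun u _ => Finset.sum_nonneg fun v _ =>
    mul_nonneg (by positivity) (hπ.1 u v).1

/-- Convexity of `p ↦ W(μ_x^p, μ_y^p)`, used only between `p` and `1`, where the distance is that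
of two Dirac masses: a plan at idleness `p` mixed with the transport of `x` to `y` is a plan at any
idleness `q ∈ [p, 1)`. -/
lemma Wdist_convex {V : Type*} [Fintype V] (G : SimpleGraph V) {x y : V} (hxy : G.Adj x y)
    (hx : (G.degree x : ℝ) ≠ 0) (hy : (G.degree y : ℝ) ≠ 0)
    {p q : ℝ} (h0 : 0 ≤ p) (hpq : p ≤ q) (hq : q < 1) :
    (1 - p) * Wdist G (muP G q x) (muP G q y) ≤
      (1 - q) * Wdist G (muP G p x) (muP G p y) + (q - p) := by
  have hp1 : 0 < 1 - p := by linarith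
  set t : ℝ := (1 - q) / (1 - p) with ht
  have ht0 : 0 < t := div_pos (by linarith) hp1
  have ht1 : t ≤ 1 := (div_le_one hp1).2 (by linarith)
  have htp : t * (1 - p) = 1 - q := by rw [ht]; field_simp
  have hmix : ∀ x z, muP G q x z = t * muP G p x z + (1 - t) * (if z = x then 1 else 0) := by
    intro x z
    unfold muP
    split_ifs
    · linear_combination htp
    · rw [← htp]; ring
    · ring
  have key : (Wdist G (muP G q x) (muP G q y) - (1 - t)) / t ≤ Wdist G (muP G p x) (muP G p y) := by
    obtain ⟨π₀, hπ₀⟩ := exists_plan G h0 (by linarith) x y hx hy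
    refine le_csInf ⟨_, π₀, hπ₀, rfl⟩ ?_
    rintro c ⟨π, hπ, rfl⟩
    rw [div_le_iff₀ ht0, sub_le_iff_le_add]
    refine csInf_le (bddBelow_costs G _ _)
      ⟨fun u v => t * π u v + (1 - t) * ((if u = x then 1 else 0) * (if v = y then 1 else 0)),
        ⟨fun u v => ⟨?_, ?_⟩, fun u => ?_, fun v => ?_⟩, ?_⟩
    · have := (hπ.1 u v).1
      have : 0 ≤ 1 - t := by linarith
      positivity
    · have := (hπ.1 u v).2
      have h1 : ((if u = x then 1 else 0) * (if v = y then 1 else 0) : ℝ) ≤ 1 := by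
        split_ifs <;> simp
      nlinarith
    · rw [Finset.sum_add_distrib, ← Finset.mul_sum, hπ.2.1, ← Finset.mul_sum, ← Finset.mul_sum,
        hmix]
      simp
    · rw [Finset.sum_add_distrib, ← Finset.mul_sum, hπ.2.2, ← Finset.mul_sum, ← Finset.sum_mul,
        hmix]
      simp
    · have e : ∑ u, ∑ v, (G.dist u v : ℝ) *
          ((if u = x then 1 else 0) * (if v = y then 1 else 0)) = 1 := by
        simp [SimpleGraph.dist_eq_one_iff_adj.2 hxy]
      unfold planCost
      calc _ = (∑ u, ∑ v, (G.dist u v : ℝ) * π u v) * t + (1 - t) * ∑ u, ∑ v, (G.dist u v : ℝ) *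
          ((if u = x then 1 else 0) * (if v = y then 1 else 0)) := by rw [e]; ring
        _ = _ := by
          simp only [Finset.sum_mul, Finset.mul_sum, ← Finset.sum_add_distrib]
          exact Finset.sum_congr rfl fun u _ => Finset.sum_congr rfl fun v _ => by ring
  rw [div_le_iff₀ ht0] at key
  have := mul_le_mul_of_nonneg_left key hp1.le
  linear_combination this + (Wdist G (muP G p x) (muP G p y) - 1) * htp

/-- The upper bound on the curvature of an edge given by a test function. The limit defining
`kappaLLY` exists because the quotient is monotone in `p` (by convexity of the Wasserstein
distance) and bounded by the right-hand side (by duality). -/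
lemma kappaLLY_le {V : Type*} [Fintype V] {G : SimpleGraph V} (hconn : G.Connected)
    {x y : V} (hxy : G.Adj x y) {f : V → ℝ} (hf : ∀ u v, G.Adj u v → f v - f u ≤ 1)
    (hfxy : f y - f x = 1) :
    kappaLLY G x y ≤ (∑ z ∈ G.neighborFinset x, (f z - f x)) / G.degree x -
      (∑ z ∈ G.neighborFinset y, (f z - f y)) / G.degree y := by
  have hx : (G.degree x : ℝ) ≠ 0 :=
    Nat.cast_ne_zero.2 ((G.degree_pos_iff_exists_adj x).2 ⟨y, hxy⟩).ne'
  have hy : (G.degree y : ℝ) ≠ 0 :=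
    Nat.cast_ne_zero.2 ((G.degree_pos_iff_exists_adj y).2 ⟨x, hxy.symm⟩).ne'
  set K := (∑ z ∈ G.neighborFinset x, (f z - f x)) / G.degree x -
      (∑ z ∈ G.neighborFinset y, (f z - f y)) / G.degree y with hK
  set F : ℝ → ℝ := fun p => (1 - Wdist G (muP G p x) (muP G p y) / (G.dist x y)) / (1 - p) with hF
  have hF' : ∀ p, F p = (1 - Wdist G (muP G p x) (muP G p y)) / (1 - p) := fun p => by
    simp [hF, SimpleGraph.dist_eq_one_iff_adj.2 hxy]
  have hle : ∀ p ∈ Set.Ioo (0 : ℝ) 1, F p ≤ K := by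
    rintro p ⟨h0, h1⟩
    rw [hF', div_le_iff₀ (by linarith)]
    obtain ⟨π₀, hπ₀⟩ := exists_plan G h0.le h1.le x y hx hy
    have : 1 - K * (1 - p) ≤ Wdist G (muP G p x) (muP G p y) := by
      refine le_csInf ⟨_, π₀, hπ₀, rfl⟩ ?_
      rintro c ⟨π, hπ, rfl⟩
      have := sum_sub_sum_le_planCost hconn hf hπ
      rw [sum_mul_muP G f p x hx, sum_mul_muP G f p y hy] at this
      rw [hK]
      linarith
    linarith
  have hmono : MonotoneOn F (Set.Ioo 0 1) := by
    rintro p ⟨h0, h1⟩ q ⟨_, hq⟩ hpq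
    rw [hF', hF', div_le_div_iff₀ (by linarith) (by linarith)]
    have := Wdist_convex G hxy hx hy h0.le hpq hq
    linarith
  have hlim : Tendsto F (nhdsWithin 1 (Set.Iio 1)) (nhds (sSup (F '' Set.Ioo 0 1))) :=
    hmono.tendsto_nhdsWithin_Ioo_left ⟨1 / 2, by norm_num, by norm_num⟩
      ⟨K, by rintro _ ⟨p, hp, rfl⟩; exact hle p hp⟩
  have : kappaLLY G x y = sSup (F '' Set.Ioo 0 1) := hlim.limUnder_eq
  rw [this]
  refine csSup_le ⟨_, 1 / 2, ⟨by norm_num, by norm_num⟩, rfl⟩ ?_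
  rintro _ ⟨p, hp, rfl⟩
  exact hle p hp

lemma kappaLLYedge_le {V : Type*} [Fintype V] (G : SimpleGraph V) {x y : V} (hxy : G.Adj x y) :
    kappaLLYedge G ≤ kappaLLY G x y := by
  refine csInf_le (Set.Finite.bddBelow ?_) ⟨x, y, hxy, rfl⟩
  refine (Set.finite_range fun e : V × V => kappaLLY G e.1 e.2).subset ?_
  rintro k ⟨u, v, -, rfl⟩
  exact ⟨(u, v), rfl⟩

/-! ### The edges between a separator and its two sides -/

/-- The curvature bound for an edge from `x ∈ A` to `s ∈ S`. The test function is `2` on `B`,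
`1` on `S` and on the neighbors of `s` other than `x`, and `0` elsewhere. -/
lemma kappa_mul_minDegree_le {V : Type*} [Fintype V] {G : SimpleGraph V} (hconn : G.Connected)
    {A B S : Finset V} (hcover : ∀ z, z ∈ A ∨ z ∈ S ∨ z ∈ B) (hAS : Disjoint A S)
    (hAB : Disjoint A B) (hBS : Disjoint B S) (hno : ∀ u ∈ A, ∀ v ∈ B, ¬ G.Adj u v)
    {x s : V} (hxA : x ∈ A) (hsS : s ∈ S) (hxs : G.Adj x s) {α : ℕ}
    (hα : (G.neighborFinset x ∩ G.neighborFinset s).card ≤ α) :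
    kappaLLYedge G * G.minDegree ≤ 1 + α +
      (G.neighborFinset x ∩ (S \ G.neighborFinset s).erase s).card +
      G.minDegree * ((1 - (G.neighborFinset s ∩ B).card) / G.degree s) := by
  have dAS := Finset.disjoint_left.1 hAS
  have dAB := Finset.disjoint_left.1 hAB
  have dBS := Finset.disjoint_left.1 hBS
  set f : V → ℝ := fun z =>
    if z ∈ B then 2 else if z ∈ S ∨ (G.Adj s z ∧ z ≠ x) then 1 else 0 with hfdef
  have fx : f x = 0 := by simp [hfdef, dAB hxA, dAS hxA]
  have fs : f s = 1 := by
    have : s ∉ B := fun h => dBS h hsS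
    simp [hfdef, this, hsS]
  have hf : ∀ u v, G.Adj u v → f v - f u ≤ 1 := by
    intro u v huv
    have hcu := hcover u
    by_cases hv : v ∈ B
    · have hu : u ∉ A := fun h => hno u h v hv huv
      have : u ∈ B ∨ u ∈ S := by tauto
      by_cases hu : u ∈ B
      · simp [hfdef, hv, hu]
      · have : u ∈ S := by tauto
        simp [hfdef, hv, hu, this]; norm_num
    · simp only [hfdef, hv, if_false]
      split_ifs <;> norm_num
  have hk := (kappaLLYedge_le G hxs).trans (kappaLLY_le hconn hxs hf (by rw [fx, fs]; norm_num))
  have hX : ∑ z ∈ G.neighborFinset x, (f z - f x) ≤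
      1 + α + (G.neighborFinset x ∩ (S \ G.neighborFinset s).erase s).card := by
    have hpt : ∀ z ∈ G.neighborFinset x, f z - f x ≤ (if z = s then 1 else 0) +
        (if z ∈ G.neighborFinset s then 1 else 0) +
        (if z ∈ (S \ G.neighborFinset s).erase s then 1 else 0) := by
      intro z hz
      rw [SimpleGraph.mem_neighborFinset] at hz
      have hzB : z ∉ B := fun h => hno x hxA z h hz
      simp only [hfdef, hzB, if_false, Finset.mem_erase, Finset.mem_sdiff,
        SimpleGraph.mem_neighborFinset]
      by_cases h1 : z = s <;> by_cases h2 : G.Adj s z <;> by_cases h3 : z ∈ S <;>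
        simp [h1, h2, h3, dAS hxA, dAB hxA] <;> split_ifs <;> norm_num
    refine (Finset.sum_le_sum hpt).trans ?_
    rw [Finset.sum_add_distrib, Finset.sum_add_distrib, Finset.sum_ite_eq', Finset.sum_ite_mem,
      Finset.sum_ite_mem]
    have : ((G.neighborFinset x ∩ G.neighborFinset s).card : ℝ) ≤ α := by exact_mod_cast hα
    simp only [SimpleGraph.mem_neighborFinset, hxs, if_true, Finset.sum_const, nsmul_eq_mul,
      mul_one]
    linarith
  have hY : (G.neighborFinset s ∩ B).card - 1 ≤ ∑ z ∈ G.neighborFinset s, (f z - f s) := by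
    have hpt : ∀ z ∈ G.neighborFinset s, ((if z ∈ B then 1 else 0) - (if z = x then 1 else 0) : ℝ)
        ≤ f z - f s := by
      intro z hz
      rw [SimpleGraph.mem_neighborFinset] at hz
      rw [fs]
      by_cases h1 : z = x
      · subst h1
        simp [hfdef, dAB hxA, dAS hxA]
      · by_cases h2 : z ∈ B
        · simp [hfdef, h1, h2]; norm_num
        · simp [hfdef, h1, h2, hz]
    refine le_trans (le_of_eq ?_) (Finset.sum_le_sum hpt)
    rw [Finset.sum_sub_distrib, Finset.sum_ite_eq', Finset.sum_ite_mem]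
    simp [hxs.symm]
  have hdx : (0 : ℝ) < G.degree x :=
    Nat.cast_pos.2 ((G.degree_pos_iff_exists_adj x).2 ⟨s, hxs⟩)
  have hds : (0 : ℝ) < G.degree s :=
    Nat.cast_pos.2 ((G.degree_pos_iff_exists_adj s).2 ⟨x, hxs.symm⟩)
  have hδ0 : (0 : ℝ) ≤ G.minDegree := by positivity
  have hδx : (G.minDegree : ℝ) ≤ G.degree x := Nat.cast_le.2 (G.minDegree_le_degree x)
  set P : ℝ := 1 + α + ((G.neighborFinset x ∩ (S \ G.neighborFinset s).erase s).card : ℝ) with hP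
  have hP0 : 0 ≤ P := add_nonneg (by positivity) (Nat.cast_nonneg _)
  have h1 : kappaLLYedge G ≤ P / G.degree x +
      (1 - (G.neighborFinset s ∩ B).card) / G.degree s := by
    refine hk.trans ?_
    rw [sub_eq_add_neg, ← neg_div]
    exact add_le_add (div_le_div_of_nonneg_right hX hdx.le)
      (div_le_div_of_nonneg_right (by linarith) hds.le)
  have h2 : P / G.degree x * G.minDegree ≤ P := by
    rw [div_mul_eq_mul_div, div_le_iff₀ hdx]
    exact mul_le_mul_of_nonneg_left hδx hP0
  have h3 := mul_le_mul_of_nonneg_right h1 hδ0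
  linarith

/-- A minimum vertex cut `S` of a non-complete connected graph, the two sides `A`, `B` it
separates, and a vertex of `S` adjacent to both sides. -/
lemma exists_cut {V : Type*} [Fintype V] {G : SimpleGraph V} (hconn : G.Connected) (hnc : G ≠ ⊤) :
    ∃ A B S : Finset V, S.card = vertexConnectivity G ∧ (∀ z, z ∈ A ∨ z ∈ S ∨ z ∈ B) ∧
      Disjoint A S ∧ Disjoint A B ∧ Disjoint B S ∧ (∀ u ∈ A, ∀ v ∈ B, ¬ G.Adj u v) ∧
      ∃ s ∈ S, ∃ x ∈ A, ∃ y ∈ B, G.Adj x s ∧ G.Adj y s := by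
  obtain ⟨a, b, hab, hnab⟩ : ∃ a b, a ≠ b ∧ ¬ G.Adj a b := by
    by_contra! h
    exact hnc (by ext u v; simpa using ⟨fun h => h.ne, h u v⟩)
  let C : Set ℕ := {n : ℕ | ∃ S : Finset V, S.card = n ∧
    (¬ (G.induce ((S : Set V)ᶜ)).Connected ∨ ((S : Set V)ᶜ).Subsingleton)}
  have hC : vertexConnectivity G = sInf C := rfl
  have hmem : sInf C ∈ C := Nat.sInf_mem ⟨_, Finset.univ, rfl, Or.inr (by simp)⟩
  obtain ⟨S, hS, hS'⟩ := hmem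
  -- removing everything but two non-adjacent vertices disconnects the graph
  have hab' : ¬ (G.induce (((({a, b} : Finset V)ᶜ : Finset V) : Set V)ᶜ)).Connected := by
    intro h
    obtain ⟨d, -, hd1, hd2⟩ := (h.preconnected ⟨a, by simp⟩ ⟨b, by simp⟩).some.exists_boundary_dart
      {z | z.1 = a} rfl (by simpa using hab.symm)
    have hadj : G.Adj d.fst.1 d.snd.1 := d.adj
    have hsnd : d.snd.1 = a ∨ d.snd.1 = b := by
      have := d.snd.2
      simp only [Finset.coe_compl, compl_compl, Finset.coe_insert, Finset.coe_singleton] at this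
      simpa only [Set.mem_insert_iff, Set.mem_singleton_iff] using this
    simp only [Set.mem_ofPred_eq] at hd1 hd2
    rw [hd1] at hadj
    rcases hsnd with h | h
    · exact hd2 h
    · exact hnab (h ▸ hadj)
  have hle : sInf C ≤ ({a, b} : Finset V)ᶜ.card := Nat.sInf_le ⟨_, rfl, Or.inl hab'⟩
  have hns : ¬ ((S : Set V)ᶜ).Subsingleton := by
    intro h
    have h1 : Sᶜ.card ≤ 1 := Finset.card_le_one.2 fun p hp q hq =>
      h (by simpa using hp) (by simpa using hq)
    have h2 : ({a, b} : Finset V).card = 2 := Finset.card_pair hab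
    have h3 := S.card_compl_add_card
    have h4 := ({a, b} : Finset V).card_compl_add_card
    omega
  have hnc : ¬ (G.induce ((S : Set V)ᶜ)).Connected := hS'.resolve_right hns
  obtain ⟨u₀, hu₀⟩ : ((S : Set V)ᶜ).Nonempty := by
    rw [Set.nonempty_iff_ne_empty]
    exact fun h => hns (h ▸ Set.subsingleton_empty)
  obtain ⟨u, v, huv⟩ : ∃ u v, ¬ (G.induce ((S : Set V)ᶜ)).Reachable u v := by
    by_contra! h
    exact hnc { preconnected := h, nonempty := ⟨⟨u₀, hu₀⟩⟩ }
  let A : Finset V := Finset.univ.filter fun z =>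
    ∃ h : z ∈ (S : Set V)ᶜ, (G.induce ((S : Set V)ᶜ)).Reachable u ⟨z, h⟩
  let B : Finset V := Finset.univ.filter fun z => z ∉ S ∧ z ∉ A
  have hAmem : ∀ z, z ∈ A ↔ ∃ h : z ∈ (S : Set V)ᶜ,
    (G.induce ((S : Set V)ᶜ)).Reachable u ⟨z, h⟩ := fun z => by simp [A]
  have hBmem : ∀ z, z ∈ B ↔ z ∉ S ∧ z ∉ A := fun z => by
    simp only [B, Finset.mem_filter, Finset.mem_univ, true_and]
  have hAS : ∀ z ∈ A, z ∉ S := fun z hz => by simpa using ((hAmem z).1 hz).1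
  have hno : ∀ p ∈ A, ∀ q ∈ B, ¬ G.Adj p q := by
    intro p hp q hq hpq
    obtain ⟨hp', hr⟩ := (hAmem p).1 hp
    obtain ⟨hq', hqA⟩ := (hBmem q).1 hq
    refine hqA ((hAmem q).2 ⟨by simpa using hq', hr.trans ?_⟩)
    exact SimpleGraph.Adj.reachable (by simpa using hpq)
  have huA : u.1 ∈ A := (hAmem _).2 ⟨u.2, SimpleGraph.Reachable.refl _⟩
  have hvB : v.1 ∈ B := (hBmem _).2 ⟨fun h => v.2 (Finset.mem_coe.2 h),
    fun h => huv ((hAmem _).1 h).2⟩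
  have hcover : ∀ z, z ∈ A ∨ z ∈ S ∨ z ∈ B := fun z => by have := hBmem z; tauto
  have hAB : ∀ z ∈ A, z ∉ B := fun z hz h => ((hBmem z).1 h).2 hz
  obtain ⟨s, hs⟩ : S.Nonempty := by
    rw [Finset.nonempty_iff_ne_empty]
    rintro rfl
    obtain ⟨d, -, hd1, hd2⟩ := (hconn.preconnected u.1 v.1).some.exists_boundary_dart
      (A : Set V) huA (fun h => hAB _ h hvB)
    have h2 := hcover d.snd
    simp only [Finset.mem_coe] at hd1 hd2
    exact hno _ hd1 d.snd (by simpa [hd2] using h2) d.adj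
  -- by minimality, putting `s` back reconnects the two sides
  have hconn' : (G.induce (((S.erase s : Finset V) : Set V)ᶜ)).Connected := by
    by_contra h
    have := Nat.sInf_le (show _ ∈ C from ⟨S.erase s, rfl, Or.inl h⟩)
    rw [Finset.card_erase_of_mem hs] at this
    have := Finset.card_pos.2 ⟨s, hs⟩
    omega
  have hcross : ∀ D : Finset V, (∀ z ∈ D, z ∉ S) → (∃ p, p ∈ D) → (∃ q, q ∉ S ∧ q ∉ D) →
      (∀ p ∈ D, ∀ q, q ∉ S → q ∉ D → ¬ G.Adj p q) → ∃ p ∈ D, G.Adj p s := by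
    rintro D hDS ⟨p, hp⟩ ⟨q, hqS, hqD⟩ hD
    have hp' : p ∈ (((S.erase s : Finset V) : Set V)ᶜ) := by simp [hDS p hp]
    have hq' : q ∈ (((S.erase s : Finset V) : Set V)ᶜ) := by simp [hqS]
    obtain ⟨d, -, hd1, hd2⟩ := (hconn'.preconnected ⟨p, hp'⟩ ⟨q, hq'⟩).some.exists_boundary_dart
      {z | z.1 ∈ D} hp hqD
    have hadj : G.Adj d.fst.1 d.snd.1 := d.adj
    have hsnd : d.snd.1 ∉ S.erase s := fun h => d.snd.2 (Finset.mem_coe.2 h)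
    refine ⟨d.fst.1, hd1, ?_⟩
    by_cases h : d.snd.1 = s
    · rwa [h] at hadj
    · exact absurd hadj (hD _ hd1 _ (fun h' => hsnd (Finset.mem_erase.2 ⟨h, h'⟩)) hd2)
  obtain ⟨x, hx, hxs⟩ := hcross A hAS ⟨_, huA⟩ ⟨v.1, ((hBmem _).1 hvB)⟩
    fun p hp q hq hq' => hno p hp q ((hBmem q).2 ⟨hq, hq'⟩)
  obtain ⟨y, hy, hys⟩ := hcross B (fun z hz => ((hBmem z).1 hz).1) ⟨_, hvB⟩
    ⟨u.1, hAS _ huA, hAB _ huA⟩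
    fun p hp q hq hq' h => hno q (by have := hcover q; tauto) p hp h.symm
  refine ⟨A, B, S, hS, hcover, Finset.disjoint_left.2 hAS, Finset.disjoint_left.2 hAB,
    Finset.disjoint_left.2 fun z hz => ((hBmem z).1 hz).1, hno, s, hs, x, hx, y, hy, hxs, hys⟩

/-! ### The connectivity bound -/

/-- If any two adjacent vertices have at most `α` common neighbors and
any two vertices at distance 2 have at most `β` common neighbors, then
`k(G) ≥ (2κ_LLY(G) + 1)δ(G) − 2α − β − 2`. -/
theorem connectivity_ge_of_common_neighbor_bounds
    {V : Type*} [Fintype V] (G : SimpleGraph V)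
    (hconn : G.Connected) (hnc : G ≠ ⊤) (α β : ℕ)
    (hα : ∀ u v : V, G.Adj u v → (G.neighborFinset u ∩ G.neighborFinset v).card ≤ α)
    (hβ : ∀ u v : V, G.dist u v = 2 → (G.neighborFinset u ∩ G.neighborFinset v).card ≤ β) :
    (2 * kappaLLYedge G + 1) * (G.minDegree : ℝ) - 2 * α - β - 2 ≤ (vertexConnectivity G : ℝ) := by
  obtain ⟨A, B, S, hk, hcover, hAS, hAB, hBS, hno, s, hs, x, hx, y, hy, hxs, hys⟩ :=
    exists_cut hconn hnc
  rw [← hk]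
  have hxk := kappa_mul_minDegree_le hconn hcover hAS hAB hBS hno hx hs hxs (hα _ _ hxs)
  have hyk := kappa_mul_minDegree_le hconn (A := B) (B := A) (S := S)
    (fun z => by have := hcover z; tauto) hBS hAB.symm hAS
    (fun u hu v hv h => hno v hv u hu h.symm) hy hs hys (hα _ _ hys)
  have hxy : x ≠ y := fun h => Finset.disjoint_left.1 hAB hx (h ▸ hy)
  have hdist : G.dist x y = 2 := by
    have h1 : G.dist x y ≤ 2 :=
      SimpleGraph.dist_le (SimpleGraph.Walk.cons hxs (SimpleGraph.Walk.cons hys.symm .nil))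
    have h2 : G.dist x y ≠ 0 := fun h => hxy (hconn.dist_eq_zero_iff.1 h)
    have h3 : G.dist x y ≠ 1 := fun h => hno x hx y hy (SimpleGraph.dist_eq_one_iff_adj.1 h)
    omega
  set R := (S \ G.neighborFinset s).erase s with hR
  have hRcard : R.card + 1 + (G.neighborFinset s ∩ S).card = S.card := by
    have h1 : s ∈ S \ G.neighborFinset s := by simp [hs]
    rw [hR, Finset.card_erase_add_one h1, Finset.inter_comm, Finset.card_sdiff_add_card_inter]
  have hcount : (G.neighborFinset x ∩ R).card + (G.neighborFinset y ∩ R).card + 1 ≤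
      R.card + β := by
    have h1 := Finset.card_union_add_card_inter (G.neighborFinset x ∩ R) (G.neighborFinset y ∩ R)
    have h2 : ((G.neighborFinset x ∩ R) ∪ (G.neighborFinset y ∩ R)).card ≤ R.card :=
      Finset.card_le_card (Finset.union_subset Finset.inter_subset_right Finset.inter_subset_right)
    -- `s` is a common neighbor of `x` and `y` outside `R`
    have hsmem : s ∈ G.neighborFinset x ∩ G.neighborFinset y := by simp [hxs, hys]
    have h3 : ((G.neighborFinset x ∩ R) ∩ (G.neighborFinset y ∩ R)).card ≤
        ((G.neighborFinset x ∩ G.neighborFinset y).erase s).card := by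
      refine Finset.card_le_card fun z hz => ?_
      simp only [hR, Finset.mem_inter, Finset.mem_erase] at hz ⊢
      tauto
    have h4 := Finset.card_erase_add_one hsmem
    have h5 := hβ x y hdist
    omega
  have hdeg : (G.neighborFinset s ∩ A).card + (G.neighborFinset s ∩ B).card +
      (G.neighborFinset s ∩ S).card = G.degree s := by
    rw [← SimpleGraph.card_neighborFinset_eq_degree, ← Finset.card_union_of_disjoint,
      ← Finset.card_union_of_disjoint]
    · congr 1
      ext z
      have := hcover z
      simp only [Finset.mem_union, Finset.mem_inter]
      tauto
    · rw [← Finset.inter_union_distrib_left]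
      exact Finset.disjoint_of_subset_left Finset.inter_subset_right
        (Finset.disjoint_of_subset_right Finset.inter_subset_right
          (Finset.disjoint_union_left.2 ⟨hAS, hBS⟩))
    · exact Finset.disjoint_of_subset_left Finset.inter_subset_right
        (Finset.disjoint_of_subset_right Finset.inter_subset_right hAB)
  have hds : (0 : ℝ) < G.degree s :=
    Nat.cast_pos.2 ((G.degree_pos_iff_exists_adj s).2 ⟨x, hxs.symm⟩)
  have hδs : (G.minDegree : ℝ) ≤ G.degree s := Nat.cast_le.2 (G.minDegree_le_degree s)
  set δ : ℝ := (G.minDegree : ℝ)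
  have hcombine : δ * ((1 - (G.neighborFinset s ∩ B).card) / G.degree s) +
      δ * ((1 - (G.neighborFinset s ∩ A).card) / G.degree s) ≤
      2 + (G.neighborFinset s ∩ S).card - δ := by
    have hdeg' : ((G.neighborFinset s ∩ A).card : ℝ) + (G.neighborFinset s ∩ B).card +
      (G.neighborFinset s ∩ S).card = G.degree s := by exact_mod_cast hdeg
    have e : δ * ((1 - (G.neighborFinset s ∩ B).card) / G.degree s) +
      δ * ((1 - (G.neighborFinset s ∩ A).card) / G.degree s) =
      δ / G.degree s * (2 + (G.neighborFinset s ∩ S).card) - δ := by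
      rw [← eq_sub_iff_add_eq'] at hdeg'
      rw [hdeg']
      field_simp
      ring
    have h1 : δ / G.degree s ≤ 1 := (div_le_one hds).2 hδs
    have h2 : δ / G.degree s * (2 + (G.neighborFinset s ∩ S).card) ≤
        1 * (2 + (G.neighborFinset s ∩ S).card) :=
      mul_le_mul_of_nonneg_right h1 (by positivity)
    linarith
  have hRcard' : (R.card : ℝ) + 1 + (G.neighborFinset s ∩ S).card = S.card := by
    exact_mod_cast hRcard
  have hcount' : ((G.neighborFinset x ∩ R).card : ℝ) + (G.neighborFinset y ∩ R).card + 1 ≤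
      R.card + β := by exact_mod_cast hcount
  linarith
end

section
/- Let G be a finite connected amply regular graph with parameters (d,α,β) such that β ≥ α and β ≠ 1, and suppose G is not complete. Then the connectivity of G satisfies k(G) ≥ d − 2·⌊(α² − α)/(β − 1)⌋ − β + 2. -/
/-!
Let `S` be a vertex set realising the connectivity. If at most one vertex lies outside `S`, then
`|S| ≥ d` and the bound is clear. Otherwise `S` is a minimum cut: the remaining vertices split into
nonempty parts `X` and `Y` with no edges between them. Connectedness of `G` and minimality of
`S` give a vertex `s ∈ S` with neighbours `x ∈ X` and `y ∈ Y`. Put `f = ⌊(α² - α) / (β - 1)⌋`.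

The key inequality (`card_le_add_floor`) is
`|N(s) ∩ Y| ≤ |P| + f` with `P = {v ∈ S | v ∼ x, v ≁ s, v ≠ s}`.
Every `w ∈ N(s) ∩ Y` is at distance two from `x`, and its `β` common neighbours with `x` lie in `S`:
they are `s`, some vertices of `Δ = N(s) ∩ N(x)`, and vertices of `P`. A vertex of `Δ` has at most
`α - 1` neighbours in `N(s) ∩ Y`, because `x` is one of the `α` common neighbours it has with `s`;
a vertex of `P` has at most `β - 1` of them, for the same reason. Double counting gives
`(β - 1) |N(s) ∩ Y| ≤ (β - 1) |P| + α (α - 1)`.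

By symmetry `|N(s) ∩ X| ≤ |Q| + f` with `Q = {v ∈ S | v ∼ y, v ≁ s, v ≠ s}`. Since `P ∩ Q` consists
of common neighbours of `x` and `y` other than `s`, it has at most `β - 1` elements, whence
`d = |N(s) ∩ S| + |N(s) ∩ X| + |N(s) ∩ Y| ≤ |N(s) ∩ S| + |P ∪ Q| + (β - 1) + 2f`
`  ≤ |S| - 1 + (β - 1) + 2f`.
-/

open Filter Finset

attribute [local instance] Classical.propDecidable

variable {V : Type*}

lemma dist_eq_two_of_common {V : Type*} {G : SimpleGraph V} {u v w : V}
    (hne : u ≠ v) (hn : ¬ G.Adj u v) (h1 : G.Adj u w) (h2 : G.Adj w v) : G.dist u v = 2 := by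
  have hle : G.dist u v ≤ 2 := G.dist_le (.cons h1 (.cons h2 .nil))
  have h0 : G.dist u v ≠ 0 := fun h => hne
    ((SimpleGraph.Reachable.dist_eq_zero_iff (h1.reachable.trans h2.reachable)).1 h)
  have h1 : G.dist u v ≠ 1 := fun h => hn (SimpleGraph.dist_eq_one_iff_adj.1 h)
  omega

/-- If the neighbours `T` of `s` are non-adjacent to a neighbour `x` of `s` and all their common
neighbours with `x` lie in `S`, then `S` contains at least `|T| - ⌊(α² - α) / (β - 1)⌋` neighbours
of `x` outside the closed neighbourhood of `s`. -/
lemma card_le_add_floor {V : Type*} [Fintype V] {G : SimpleGraph V} {d α β : ℕ}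
    (har : IsAmplyRegular G d α β) (hb : 2 ≤ β) {S T : Finset V} {x s : V} (hxs : G.Adj x s)
    (hT : ∀ w ∈ T, G.Adj s w ∧ w ≠ x ∧ ¬ G.Adj w x)
    (hTS : ∀ w ∈ T, ∀ v, G.Adj w v → G.Adj x v → v ∈ S) :
    (T.card : ℤ) ≤ ((S.filter fun v => G.Adj x v ∧ ¬ G.Adj s v ∧ v ≠ s).card : ℤ)
      + ⌊((α : ℚ) ^ 2 - α) / ((β : ℚ) - 1)⌋ := by
  obtain ⟨-, hα, hβ⟩ := har
  set P := S.filter fun v => G.Adj x v ∧ ¬ G.Adj s v ∧ v ≠ s with hP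
  set D := G.neighborFinset s ∩ G.neighborFinset x with hD
  have hDcard : D.card = α := hα _ _ hxs.symm
  have hlow : ∀ w ∈ T, β - 1 ≤ (P.bipartiteAbove G.Adj w).card
      + (D.bipartiteAbove G.Adj w).card := by
    intro w hw
    obtain ⟨h1, h2, h3⟩ := hT w hw
    have hc := hβ w x (dist_eq_two_of_common h2 h3 h1.symm hxs.symm)
    have hsub : G.neighborFinset w ∩ G.neighborFinset x ⊆
        insert s (P.bipartiteAbove G.Adj w ∪ D.bipartiteAbove G.Adj w) := by
      intro v hv
      simp only [mem_inter, SimpleGraph.mem_neighborFinset] at hv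
      have := hTS w hw v hv.1 hv.2
      simp only [mem_insert, mem_union, Finset.mem_bipartiteAbove, hP, hD, mem_filter, mem_inter,
        SimpleGraph.mem_neighborFinset]
      tauto
    have := (card_le_card hsub).trans (card_insert_le _ _)
    have := card_union_le (P.bipartiteAbove G.Adj w) (D.bipartiteAbove G.Adj w)
    omega
  have hx : ∀ v, G.Adj x v →
      (T.bipartiteBelow G.Adj v).card + 1 ≤ (G.neighborFinset s ∩ G.neighborFinset v).card := by
    intro v hv
    have hnot : x ∉ T.bipartiteBelow G.Adj v := fun h =>
      (hT x ((Finset.mem_bipartiteBelow G.Adj).1 h).1).2.1 rfl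
    rw [← card_insert_of_notMem hnot]
    refine card_le_card fun w hw => ?_
    simp only [mem_inter, SimpleGraph.mem_neighborFinset]
    rcases mem_insert.1 hw with rfl | hw
    · exact ⟨hxs.symm, hv.symm⟩
    · rw [Finset.mem_bipartiteBelow] at hw
      exact ⟨(hT w hw.1).1, hw.2.symm⟩
  have hupP : ∀ v ∈ P, (T.bipartiteBelow G.Adj v).card ≤ β - 1 := by
    intro v hv
    obtain ⟨-, h1, h2, h3⟩ := mem_filter.1 hv
    have := hx v h1
    rw [hβ s v (dist_eq_two_of_common h3.symm h2 hxs.symm h1)] at this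
    omega
  have hupD : ∀ v ∈ D, (T.bipartiteBelow G.Adj v).card ≤ α - 1 := by
    intro v hv
    simp only [hD, mem_inter, SimpleGraph.mem_neighborFinset] at hv
    have := hx v hv.2
    rw [hα s v hv.1] at this
    omega
  have hcount : T.card * (β - 1) ≤ P.card * (β - 1) + α * (α - 1) := by
    calc T.card * (β - 1) ≤ ∑ w ∈ T, ((P.bipartiteAbove G.Adj w).card
          + (D.bipartiteAbove G.Adj w).card) := by
          simpa using Finset.card_nsmul_le_sum _ _ _ hlow
      _ = ∑ v ∈ P, (T.bipartiteBelow G.Adj v).card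
          + ∑ v ∈ D, (T.bipartiteBelow G.Adj v).card := by
          rw [Finset.sum_add_distrib, Finset.sum_card_bipartiteAbove_eq_sum_card_bipartiteBelow,
            Finset.sum_card_bipartiteAbove_eq_sum_card_bipartiteBelow]
      _ ≤ P.card * (β - 1) + α * (α - 1) := by
          refine add_le_add ?_ ?_
          · simpa using Finset.sum_le_card_nsmul _ _ _ hupP
          · simpa [hDcard] using Finset.sum_le_card_nsmul _ _ _ hupD
  have hfl : (T.card : ℤ) - P.card ≤ ⌊((α : ℚ) ^ 2 - α) / ((β : ℚ) - 1)⌋ := by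
    have hb' : (2 : ℚ) ≤ β := by exact_mod_cast hb
    rw [Int.le_floor, le_div_iff₀ (by linarith)]
    have h1 : ((β - 1 : ℕ) : ℚ) = β - 1 := by push_cast [show 1 ≤ β by omega]; ring
    have h2 : ((α * (α - 1) : ℕ) : ℚ) = (α : ℚ) ^ 2 - α := by
      rcases Nat.eq_zero_or_pos α with rfl | h
      · simp
      · push_cast [show 1 ≤ α from h]; ring
    have h3 : ((T.card * (β - 1) : ℕ) : ℚ) ≤ ((P.card * (β - 1) + α * (α - 1) : ℕ) : ℚ) := by
      exact_mod_cast hcount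
    rw [Nat.cast_add, Nat.cast_mul, Nat.cast_mul, h1, h2] at h3
    push_cast
    linarith
  linarith

/-- `S` separates the nonempty set `X` from the nonempty set of all other vertices outside `S`. -/
def IsCut {V : Type*} (G : SimpleGraph V) (S : Finset V) (X : Set V) : Prop :=
  (∃ x, x ∉ S ∧ x ∈ X) ∧ (∃ y, y ∉ S ∧ y ∉ X) ∧
    ∀ u v, u ∉ S → v ∉ S → u ∈ X → v ∉ X → ¬ G.Adj u v

lemma IsCut.not_connected {V : Type*} {G : SimpleGraph V} {S : Finset V} {X : Set V}
    (h : IsCut G S X) : ¬ (G.induce ((S : Set V)ᶜ)).Connected := by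
  obtain ⟨⟨x, hxS, hxX⟩, ⟨y, hyS, hyX⟩, hE⟩ := h
  intro hc
  obtain ⟨p⟩ := hc.preconnected ⟨x, by simpa using hxS⟩ ⟨y, by simpa using hyS⟩
  obtain ⟨e, -, h1, h2⟩ := p.exists_boundary_dart {v | (v : V) ∈ X} hxX hyX
  exact hE _ _ (fun h => e.fst.2 h) (fun h => e.snd.2 h) h1 h2 e.adj

lemma exists_isCut {V : Type*} {G : SimpleGraph V} {S : Finset V}
    (h : ¬ (G.induce ((S : Set V)ᶜ)).Connected) (hs : ¬ ((S : Set V)ᶜ).Subsingleton) :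
    ∃ X, IsCut G S X := by
  have hne : Nonempty ((S : Set V)ᶜ : Set V) := by
    by_contra hcon
    exact hs fun a ha => (hcon ⟨⟨a, ha⟩⟩).elim
  have hp : ¬ (G.induce ((S : Set V)ᶜ)).Preconnected := fun hp =>
    h ((SimpleGraph.connected_iff _).2 ⟨hp, hne⟩)
  unfold SimpleGraph.Preconnected at hp
  push Not at hp
  obtain ⟨a, b, hab⟩ := hp
  refine ⟨{v | ∃ hv : v ∈ ((S : Set V)ᶜ), (G.induce ((S : Set V)ᶜ)).Reachable a ⟨v, hv⟩},
    ⟨a, fun h => a.2 h, a.2, .refl _⟩, ⟨b, fun h => b.2 h, fun ⟨_, hb⟩ => hab hb⟩, ?_⟩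
  rintro u v - hv ⟨hu, hr⟩ hvX hadj
  refine hvX ⟨by simpa using hv, hr.trans (SimpleGraph.Adj.reachable ?_)⟩
  simpa using hadj

/-- The bound for a cut `S` some vertex of which has neighbours on both sides. -/
lemma IsCut.bound {V : Type*} [Fintype V] {G : SimpleGraph V} {d α β : ℕ}
    (har : IsAmplyRegular G d α β) (hb1 : β ≠ 1) {S : Finset V} {X : Set V} (h : IsCut G S X)
    {s x y : V} (hs : s ∈ S) (hx : x ∉ S) (hxX : x ∈ X) (hy : y ∉ S) (hyX : y ∉ X)
    (hsx : G.Adj s x) (hsy : G.Adj s y) :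
    (d : ℤ) - 2 * ⌊((α : ℚ) ^ 2 - α) / ((β : ℚ) - 1)⌋ - β + 2 ≤ (S.card : ℤ) := by
  obtain ⟨-, -, hE⟩ := h
  have hxy : x ≠ y := fun h => hyX (h ▸ hxX)
  have hC := har.2.2 x y (dist_eq_two_of_common hxy (hE _ _ hx hy hxX hyX) hsx.symm hsy)
  have hsC : s ∈ G.neighborFinset x ∩ G.neighborFinset y := by
    simp [hsx.symm, hsy.symm]
  have hb : 2 ≤ β := by
    have := card_pos.2 ⟨s, hsC⟩
    omega
  have hY := card_le_add_floor har hb (S := S)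
    (T := (G.neighborFinset s).filter fun w => w ∉ S ∧ w ∉ X) hsx.symm
    (by
      intro w hw
      simp only [mem_filter, SimpleGraph.mem_neighborFinset] at hw
      exact ⟨hw.1, fun h => hw.2.2 (h ▸ hxX), fun h => hE x w hx hw.2.1 hxX hw.2.2 h.symm⟩)
    (by
      intro w hw v hwv hxv
      simp only [mem_filter, SimpleGraph.mem_neighborFinset] at hw
      by_contra hv
      by_cases hvX : v ∈ X
      · exact hE v w hv hw.2.1 hvX hw.2.2 hwv.symm
      · exact hE x v hx hv hxX hvX hxv)
  have hX := card_le_add_floor har hb (S := S)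
    (T := (G.neighborFinset s).filter fun w => w ∉ S ∧ w ∈ X) hsy.symm
    (by
      intro w hw
      simp only [mem_filter, SimpleGraph.mem_neighborFinset] at hw
      exact ⟨hw.1, fun h => hyX (h ▸ hw.2.2), hE w y hw.2.1 hy hw.2.2 hyX⟩)
    (by
      intro w hw v hwv hyv
      simp only [mem_filter, SimpleGraph.mem_neighborFinset] at hw
      by_contra hv
      by_cases hvX : v ∈ X
      · exact hE v y hv hy hvX hyX hyv.symm
      · exact hE w v hw.2.1 hv hw.2.2 hvX hwv)
  set TY := (G.neighborFinset s).filter fun w => w ∉ S ∧ w ∉ X with hTY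
  set TX := (G.neighborFinset s).filter fun w => w ∉ S ∧ w ∈ X with hTX
  set TS := (G.neighborFinset s).filter fun w => w ∈ S with hTS
  set P := S.filter fun v => G.Adj x v ∧ ¬ G.Adj s v ∧ v ≠ s with hP
  set Q := S.filter fun v => G.Adj y v ∧ ¬ G.Adj s v ∧ v ≠ s with hQ
  have hd : d ≤ TS.card + (TX.card + TY.card) := by
    rw [← har.1 s, ← SimpleGraph.card_neighborFinset_eq_degree]
    refine (card_le_card (t := TS ∪ (TX ∪ TY)) fun w hw => ?_).trans
      ((card_union_le _ _).trans (Nat.add_le_add_left (card_union_le _ _) _))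
    simp only [hTS, hTX, hTY, mem_union, mem_filter, hw, true_and]
    tauto
  have hPQ : (P ∩ Q).card + 1 ≤ β := by
    rw [← hC, ← card_erase_add_one hsC]
    refine Nat.add_le_add_right (card_le_card fun v hv => ?_) 1
    simp only [hP, hQ, mem_inter, mem_filter] at hv
    simp only [mem_erase, mem_inter, SimpleGraph.mem_neighborFinset]
    tauto
  have hPQS : (P ∪ Q).card + TS.card + 1 ≤ S.card := by
    have hdis : Disjoint (P ∪ Q) TS := by
      rw [Finset.disjoint_left]
      intro v hv hv'
      simp only [hP, hQ, hTS, mem_union, mem_filter, SimpleGraph.mem_neighborFinset] at hv hv'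
      tauto
    have hns : s ∉ (P ∪ Q) ∪ TS := by
      simp [hP, hQ, hTS]
    rw [← card_union_of_disjoint hdis, ← card_insert_of_notMem hns]
    refine card_le_card fun v hv => ?_
    simp only [hP, hQ, hTS, mem_insert, mem_union, mem_filter] at hv
    rcases hv with rfl | (hv | hv) | hv
    exacts [hs, hv.1, hv.1, hv.2]
  have hie := card_union_add_card_inter P Q
  omega

/-- For a finite connected non-complete amply regular graph with parameters
`(d, α, β)`, `β ≥ α`, `β ≠ 1`, we have `k(G) ≥ d − 2⌊(α² − α)/(β − 1)⌋ − β + 2`. -/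
theorem connectivity_of_amplyRegular
    {V : Type*} [Fintype V] (G : SimpleGraph V) (d α β : ℕ)
    (hconn : G.Connected) (hnc : G ≠ ⊤)
    (har : IsAmplyRegular G d α β) (hba : α ≤ β) (hb1 : β ≠ 1) :
    (d : ℤ) - 2 * ⌊((α : ℚ) ^ 2 - α) / ((β : ℚ) - 1)⌋ - β + 2 ≤ (vertexConnectivity G : ℤ) := by
  have hne : {n : ℕ | ∃ S : Finset V, S.card = n ∧
      (¬ (G.induce ((S : Set V)ᶜ)).Connected ∨ ((S : Set V)ᶜ).Subsingleton)}.Nonempty :=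
    ⟨_, univ, rfl, .inr (by simp)⟩
  obtain ⟨S, hScard, hS⟩ := Nat.sInf_mem hne
  change S.card = vertexConnectivity G at hScard
  have hmin : ∀ S' : Finset V, ¬ (G.induce ((S' : Set V)ᶜ)).Connected → S.card ≤ S'.card := by
    intro S' h
    rw [hScard]
    exact Nat.sInf_le ⟨S', rfl, .inl h⟩
  rw [← hScard]
  by_cases hsub : ((S : Set V)ᶜ).Subsingleton
  · -- The left-hand side is at most `d`, since `β ≥ 2` and the floor is nonnegative.
    have hb : 2 ≤ β := by
      obtain ⟨x, y, z, hxy, hyz, hxz, hxz'⟩ : ∃ x y z, G.Adj x y ∧ G.Adj y z ∧ x ≠ z ∧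
          ¬ G.Adj x z := by
        by_contra! hcon
        refine hnc (SimpleGraph.ext ?_)
        ext u v
        refine ⟨fun h => h.ne, fun huv => ?_⟩
        have key : ∀ w, G.Reachable u w → u ≠ w → G.Adj u w := by
          rintro w ⟨p⟩ huw
          by_contra hn
          obtain ⟨e, -, h1, h2⟩ := p.exists_boundary_dart {v | v = u ∨ G.Adj u v} (.inl rfl)
            (by simp [huw.symm, hn])
          simp only [Set.mem_ofPred_eq, not_or] at h1 h2
          rcases h1 with h1 | h1
          · exact h2.2 (h1 ▸ e.adj)
          · exact h2.2 (hcon _ _ _ h1 e.adj (Ne.symm h2.1))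
        exact key v (hconn.preconnected u v) huv
      have := har.2.2 x z (dist_eq_two_of_common hxz hxz' hxy hyz)
      have : 0 < (G.neighborFinset x ∩ G.neighborFinset z).card :=
        card_pos.2 ⟨y, by simp [hxy, hyz.symm]⟩
      omega
    have hfl : 0 ≤ ⌊((α : ℚ) ^ 2 - α) / ((β : ℚ) - 1)⌋ := by
      have hb' : (2 : ℚ) ≤ β := by exact_mod_cast hb
      refine Int.floor_nonneg.2 (div_nonneg ?_ (by linarith))
      have : (α : ℚ) ≤ (α : ℚ) ^ 2 := by exact_mod_cast Nat.le_self_pow two_ne_zero α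
      linarith
    have hcompl : Sᶜ.card ≤ 1 := by
      exact card_le_one.2 fun a ha b hb => hsub (by simpa using ha) (by simpa using hb)
    obtain ⟨v⟩ := hconn.nonempty
    have hdeg := G.degree_lt_card_verts v
    rw [har.1 v, ← S.card_add_card_compl] at hdeg
    omega
  · obtain ⟨X, hX⟩ := exists_isCut (hS.resolve_right hsub) hsub
    obtain ⟨⟨x₀, hx₀S, hx₀X⟩, ⟨y₀, hy₀S, hy₀X⟩, hE⟩ := hX
    obtain ⟨p⟩ := hconn.preconnected x₀ y₀
    obtain ⟨e, -, h1, h2⟩ := p.exists_boundary_dart {v | v ∉ S ∧ v ∈ X} ⟨hx₀S, hx₀X⟩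
      (fun h => hy₀X h.2)
    obtain ⟨⟨x, s⟩, hxs⟩ := e
    obtain ⟨hx, hxX⟩ : x ∉ S ∧ x ∈ X := h1
    replace h2 : ¬ (s ∉ S ∧ s ∈ X) := h2
    have hs : s ∈ S := by
      by_contra hs
      exact hE x s hx hs hxX (fun h => h2 ⟨hs, h⟩) hxs
    obtain ⟨y, hy, hyX, hsy⟩ : ∃ y, y ∉ S ∧ y ∉ X ∧ G.Adj s y := by
      -- Otherwise `s` could be moved from `S` to the side of `X`, giving a smaller cut.
      by_contra! hcon
      have hlt := card_erase_lt_of_mem hs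
      have hy₀s : y₀ ≠ s := fun h => hy₀S (h ▸ hs)
      have hcut : IsCut G (S.erase s) (insert s (X \ S)) := by
        refine ⟨⟨s, by simp, by simp⟩, ⟨y₀, by simp [hy₀S], by simp [hy₀s, hy₀X]⟩, ?_⟩
        intro u v hu hv huX hvX hadj
        simp only [mem_erase, Set.mem_insert_iff, Set.mem_sdiff, mem_coe] at hu hv huX hvX
        have hvS : v ∉ S := by tauto
        have hvX' : v ∉ X := by tauto
        rcases huX with rfl | ⟨huX, huS⟩
        · exact hcon v hvS hvX' hadj
        · exact hE u v huS hvS huX hvX' hadj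
      have := hmin _ hcut.not_connected
      omega
    exact IsCut.bound har hb1 ⟨⟨x₀, hx₀S, hx₀X⟩, ⟨y₀, hy₀S, hy₀X⟩, hE⟩ hs hx hxX hy hyX hxs.symm hsy
end
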